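/- Let N ≥ 2 and let Ω ⊂ ℝ^N be an open set with finite N-dimensional Lebesgue measure. Let v : Ω → ℝ^N be a C^∞ vector field whose support is a compact subset of Ω. Then for all positive real numbers η, ε, ϑ there exist a compact set K ⊂ Ω and a function φ ∈ C¹₀(Ω) such that ℋ^N(Ω ∖ K) ≤ ε·ℋ^N(Ω), sup_{x ∈ Ω} |φ(x)| ≤ ϑ, and |v(x) − ∇φ(x)| ≤ η for every x ∈ K. -/

import Mathlib

open MeasureTheory Filter

noncomputable section

/-- Euclidean space `ℝ^N`. -/
abbrev Euc (N : ℕ) := EuclideanSpace ℝ (Fin N)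

/-- `φ ∈ C¹₀(Ω)`: the class of `C¹` functions on `Ω` which, together with their gradient,
tend to `0` at the boundary of `Ω` (and at infinity); equivalently, the extension of `φ`
by zero outside `Ω` is `C¹` on all of `ℝ^N`, vanishes together with its derivative
outside `Ω`, and `φ` and `∇φ` vanish at infinity. -/
def MemC1Zero {N : ℕ} (Ω : Set (Euc N)) (φ : Euc N → ℝ) : Prop :=
  ContDiff ℝ 1 φ ∧ (∀ x ∉ Ω, φ x = 0 ∧ fderiv ℝ φ x = 0) ∧
  Tendsto (fun x => |φ x| + ‖fderiv ℝ φ x‖) (cocompact (Euc N)) (nhds 0)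

open scoped Topology Manifold

/-- The walls of the cubic grid of mesh `δ`: points with a coordinate in `δℤ`. -/
def gridWalls (N : ℕ) (δ : ℝ) : Set (Euc N) :=
  ⋃ i : Fin N, (fun x : Euc N => x i / δ) ⁻¹' Set.range ((↑) : ℤ → ℝ)

/-- The position of `x` relative to the lower corner of the cell of mesh `δ` containing it. -/
def gridOffset {N : ℕ} (δ : ℝ) (x : Euc N) : Euc N :=
  WithLp.toLp 2 fun i => δ * Int.fract (x i / δ)

theorem isClosed_gridWalls (N : ℕ) (δ : ℝ) : IsClosed (gridWalls N δ) :=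
  isClosed_iUnion_of_finite fun _ =>
    Int.isClosedEmbedding_coe_real.isClosed_range.preimage (by fun_prop)

theorem measure_gridWalls_eq_zero {N : ℕ} {δ : ℝ} (hδ : 0 < δ) (μ : Measure (Euc N))
    [μ.IsAddHaarMeasure] : μ (gridWalls N δ) = 0 := by
  refine measure_iUnion_null fun i => ?_
  have hset : (fun x : Euc N => x i / δ) ⁻¹' Set.range ((↑) : ℤ → ℝ) =
      ⋃ k : ℤ, {x : Euc N | x i = k * δ} := by
    ext x
    simp only [Set.mem_preimage, Set.mem_range, Set.mem_iUnion, Set.mem_ofPred_eq]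
    exact exists_congr fun k => by rw [eq_comm, div_eq_iff hδ.ne']
  rw [hset]
  refine measure_iUnion_null fun k => ?_
  let s : AffineSubspace ℝ (Euc N) :=
    AffineSubspace.mk' (EuclideanSpace.single i (k * δ))
      (LinearMap.ker (EuclideanSpace.proj (𝕜 := ℝ) i : Euc N →L[ℝ] ℝ).toLinearMap)
  have hs : {x : Euc N | x i = k * δ} = s := by
    ext x
    simp [s, AffineSubspace.mem_mk', sub_eq_zero]
  rw [hs]
  refine Measure.addHaar_affineSubspace μ s fun htop => ?_
  have hmem : EuclideanSpace.single i (k * δ + 1) ∈ (s : Set (Euc N)) := by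
    rw [htop]; trivial
  rw [← hs] at hmem
  simp at hmem

theorem norm_gridOffset_le {N : ℕ} {δ : ℝ} (hδ : 0 < δ) (x : Euc N) :
    ‖gridOffset δ x‖ ≤ N * δ := by
  refine abs_le_of_sq_le_sq' ?_ (by positivity) |>.2
  rw [EuclideanSpace.real_norm_sq_eq]
  calc ∑ i, (gridOffset δ x i) ^ 2 ≤ ∑ _i : Fin N, δ ^ 2 := by
        refine Finset.sum_le_sum fun i _ => ?_
        have h0 := Int.fract_nonneg (x i / δ)
        have h1 := (Int.fract_lt_one (x i / δ)).le
        exact pow_le_pow_left₀ (mul_nonneg hδ.le h0) (mul_le_of_le_one_right hδ.le h1) 2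
    _ = N * δ ^ 2 := by simp
    _ ≤ (N * δ) ^ 2 := by
        rw [mul_pow]
        gcongr
        exact_mod_cast Nat.le_self_pow two_ne_zero N

/-- Inside a cell of the grid, `gridOffset` is a translation. -/
theorem eventually_gridOffset_eq_sub {N : ℕ} {δ : ℝ} (hδ : 0 < δ) {x : Euc N}
    (hx : x ∉ gridWalls N δ) :
    ∃ c : Euc N, ∀ᶠ y in 𝓝 x, gridOffset δ y = y - c := by
  refine ⟨WithLp.toLp 2 fun i => δ * ⌊x i / δ⌋, ?_⟩
  have hfloor : ∀ i, ∀ᶠ y : Euc N in 𝓝 x, ⌊y i / δ⌋ = ⌊x i / δ⌋ := by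
    intro i
    have hne : (⌊x i / δ⌋ : ℝ) ≠ x i / δ := fun h =>
      hx (Set.mem_iUnion.2 ⟨i, ⌊x i / δ⌋, h⟩)
    have hcont : ContinuousAt (fun y : Euc N => y i / δ) x := by fun_prop
    filter_upwards [hcont.eventually (Ioo_mem_nhds
      (lt_of_le_of_ne (Int.floor_le _) hne) (Int.lt_floor_add_one _))] with y hy
    exact Int.floor_eq_iff.2 ⟨hy.1.le, hy.2⟩
  filter_upwards [eventually_all.2 hfloor] with y hy
  ext i
  simp only [gridOffset, PiLp.sub_apply, Int.fract, hy i]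
  field_simp

theorem norm_sub_gradient_inner_sub_le {E : Type*} [NormedAddCommGroup E]
    [InnerProductSpace ℝ E] [CompleteSpace E] {v : E → E} {x : E}
    (hv : DifferentiableAt ℝ v x) (c : E) :
    ‖v x - gradient (fun y => inner ℝ (v y) (y - c)) x‖ ≤ ‖fderiv ℝ v x‖ * ‖x - c‖ := by
  have hd := hv.hasFDerivAt.inner ℝ ((hasFDerivAt_id x).sub_const c)
  rw [← (InnerProductSpace.toDual ℝ E).norm_map, map_sub, toDual_gradient]
  refine ContinuousLinearMap.opNorm_le_bound _ (by positivity) fun h => ?_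
  have hh : fderiv ℝ (fun y => inner ℝ (v y) (y - c)) x h =
      inner ℝ (v x) h + inner ℝ (fderiv ℝ v x h) (x - c) := by
    simpa using congrArg (fun L => L h) hd.fderiv
  have he : (InnerProductSpace.toDual ℝ E (v x) -
      fderiv ℝ (fun y => inner ℝ (v y) (y - c)) x) h = -inner ℝ (fderiv ℝ v x h) (x - c) := by
    simp [hh]
  rw [he, norm_neg]
  calc ‖inner ℝ (fderiv ℝ v x h) (x - c)‖ ≤ ‖fderiv ℝ v x h‖ * ‖x - c‖ := norm_inner_le_norm _ _
    _ ≤ ‖fderiv ℝ v x‖ * ‖h‖ * ‖x - c‖ := by gcongr; exact (fderiv ℝ v x).le_opNorm h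
    _ = ‖fderiv ℝ v x‖ * ‖x - c‖ * ‖h‖ := by ring

theorem memC1Zero_of_tsupport_subset {N : ℕ} {Ω : Set (Euc N)} {φ : Euc N → ℝ}
    (hφ : ContDiff ℝ 1 φ) (hc : HasCompactSupport φ) (hsub : tsupport φ ⊆ Ω) :
    MemC1Zero Ω φ := by
  have hzero : ∀ x ∉ tsupport φ, φ x = 0 ∧ fderiv ℝ φ x = 0 := fun x hx =>
    ⟨image_eq_zero_of_notMem_tsupport hx,
      image_eq_zero_of_notMem_tsupport fun h => hx (tsupport_fderiv_subset ℝ h)⟩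
  refine ⟨hφ, fun x hx => hzero x fun h => hx (hsub h), ?_⟩
  refine tendsto_const_nhds.congr' ?_
  filter_upwards [hc.isCompact.compl_mem_cocompact] with x hx
  simp [hzero x hx]

/-- Step 2 reduction: the rough-approximation lemma for smooth, compactly supported
vector fields. For any open `Ω ⊆ ℝ^N` (`N ≥ 2`) with finite measure, any `C^∞` vector
field `v` whose support is a compact subset of `Ω`, and any positive `η, ε, ϑ`, there
exist a compact `K ⊆ Ω` and `φ ∈ C¹₀(Ω)` with `ℋ^N(Ω ∖ K) ≤ ε ℋ^N(Ω)`,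
`sup_Ω |φ| ≤ ϑ`, and `|v − ∇φ| ≤ η` on `K`. -/
theorem rough_approximation_of_smooth_compactly_supported (N : ℕ) (hN : 2 ≤ N)
    (Ω : Set (Euc N)) (hΩ : IsOpen Ω) (hfin : μH[N] Ω ≠ ⊤)
    (v : Euc N → Euc N) (hv : ContDiff ℝ (⊤ : ℕ∞) v)
    (hsupp : HasCompactSupport v) (hsub : tsupport v ⊆ Ω)
    (η ε ϑ : ℝ) (hη : 0 < η) (hε : 0 < ε) (hϑ : 0 < ϑ) :
    ∃ (K : Set (Euc N)) (φ : Euc N → ℝ), IsCompact K ∧ K ⊆ Ω ∧ MemC1Zero Ω φ ∧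
      μH[N] (Ω \ K) ≤ ENNReal.ofReal ε * μH[N] Ω ∧
      (∀ x ∈ Ω, |φ x| ≤ ϑ) ∧
      ∀ x ∈ K, ‖v x - gradient φ x‖ ≤ η := by
  have hv1 : ContDiff ℝ 1 v := hv.of_le (by exact_mod_cast le_top)
  have : (μH[N] : Measure (Euc N)).IsAddHaarMeasure := by
    simpa using isAddHaarMeasure_hausdorffMeasure (E := Euc N)
  obtain ⟨C₀, hC₀⟩ := hsupp.exists_bound_of_continuous hv1.continuous
  obtain ⟨C₁, hC₁⟩ := (hsupp.fderiv ℝ).exists_bound_of_continuous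
    (hv1.continuous_fderiv one_ne_zero)
  have hC₀' : 0 ≤ C₀ := (norm_nonneg _).trans (hC₀ 0)
  have hC₁' : 0 ≤ C₁ := (norm_nonneg _).trans (hC₁ 0)
  obtain ⟨δ, hδ, hδϑ, hδη⟩ : ∃ δ : ℝ, 0 < δ ∧ C₀ * (N * δ) ≤ ϑ ∧ C₁ * (N * δ) ≤ η := by
    have hlim : ∀ C : ℝ, Tendsto (fun δ : ℝ => C * (N * δ)) (𝓝[>] 0) (𝓝 0) := fun C =>
      tendsto_nhdsWithin_of_tendsto_nhds (Continuous.tendsto' (by fun_prop) _ _ (by simp))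
    exact (eventually_mem_nhdsWithin.and (((hlim C₀).eventually_le_const hϑ).and
      ((hlim C₁).eventually_le_const hη))).exists
  have hnull : μH[N] (gridWalls N δ) = 0 := measure_gridWalls_eq_zero hδ _
  have hwalls := isClosed_gridWalls N δ
  obtain ⟨K, hKsub, hK, hKμ⟩ : ∃ K ⊆ Ω \ gridWalls N δ, IsCompact K ∧
      μH[N] (Ω \ K) ≤ ENNReal.ofReal ε * μH[N] Ω := by
    rcases eq_or_ne (μH[N] Ω) 0 with h0 | h0
    · exact ⟨∅, Set.empty_subset _, isCompact_empty, by simp [h0]⟩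
    have hε' : ENNReal.ofReal ε * μH[N] Ω ≠ 0 := mul_ne_zero (by simpa using hε) h0
    obtain ⟨K, hKsub, hK, hlt⟩ :=
      (hΩ.measurableSet.diff hwalls.measurableSet).exists_isCompact_sdiff_lt
        (measure_ne_top_of_subset Set.sdiff_subset hfin) hε'
    refine ⟨K, hKsub, hK, le_trans ?_ hlt.le⟩
    rw [Set.sdiff_sdiff_comm, measure_sdiff_null hnull]
  obtain ⟨χ, hχ0, hχ1, hχ⟩ := exists_contMDiffMap_zero_one_nhds_of_isClosed (n := 1) 𝓘(ℝ, Euc N)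
    hwalls hK.isClosed (Set.disjoint_left.2 fun x hx hxK => (hKsub hxK).2 hx)
  have hχdiff : ContDiff ℝ 1 χ := χ.contMDiff.contDiff
  set φ : Euc N → ℝ := fun x => χ x * inner ℝ (v x) (gridOffset δ x) with hφ
  have hφsupp : Function.support φ ⊆ Function.support v := by
    intro x hx hvx
    exact hx (by simp [hφ, hvx])
  have hφdiff : ContDiff ℝ 1 φ := by
    refine contDiff_iff_contDiffAt.2 fun x => ?_
    by_cases hx : x ∈ gridWalls N δ
    · refine (contDiffAt_const (c := (0 : ℝ))).congr_of_eventuallyEq ?_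
      filter_upwards [eventually_nhdsSet_iff_forall.1 hχ0 x hx] with y hy
      simp [hφ, hy]
    · obtain ⟨c, hc⟩ := eventually_gridOffset_eq_sub hδ hx
      have hsmooth : ContDiff ℝ 1 fun y => χ y * inner ℝ (v y) (y - c) :=
        hχdiff.mul (hv1.inner ℝ (contDiff_id.sub contDiff_const))
      refine hsmooth.contDiffAt.congr_of_eventuallyEq ?_
      filter_upwards [hc] with y hy
      simp only [hφ, hy]
  refine ⟨K, φ, hK, hKsub.trans Set.sdiff_subset, memC1Zero_of_tsupport_subset hφdiff
    (hsupp.mono hφsupp) ((closure_mono hφsupp).trans hsub), hKμ, fun x _ => ?_, fun x hx => ?_⟩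
  · calc |φ x| = |χ x| * |inner ℝ (v x) (gridOffset δ x)| := abs_mul _ _
      _ ≤ 1 * (‖v x‖ * ‖gridOffset δ x‖) := by
          gcongr
          · exact abs_le.2 ⟨by linarith [(hχ x).1], (hχ x).2⟩
          · exact abs_real_inner_le_norm _ _
      _ ≤ C₀ * (N * δ) := by
          rw [one_mul]
          exact mul_le_mul (hC₀ x) (norm_gridOffset_le hδ x) (norm_nonneg _) hC₀'
      _ ≤ ϑ := hδϑ
  · obtain ⟨c, hc⟩ := eventually_gridOffset_eq_sub hδ (hKsub hx).2
    have hloc : φ =ᶠ[𝓝 x] fun y => inner ℝ (v y) (y - c) := by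
      filter_upwards [hc, eventually_nhdsSet_iff_forall.1 hχ1 x hx] with y hy hy1
      simp [hφ, hy, hy1]
    have hgrad : gradient φ x = gradient (fun y => inner ℝ (v y) (y - c)) x := by
      rw [gradient, gradient, hloc.fderiv_eq]
    rw [hgrad]
    calc _ ≤ ‖fderiv ℝ v x‖ * ‖x - c‖ :=
          norm_sub_gradient_inner_sub_le (hv1.differentiable one_ne_zero x) c
      _ ≤ C₁ * (N * δ) := by
          rw [← hc.self_of_nhds]
          exact mul_le_mul (hC₁ x) (norm_gridOffset_le hδ x) (norm_nonneg _) hC₁'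
      _ ≤ η := hδη
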